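/- Fix real α, β > −1, j ∈ ℕ, γ ∈ ℝ, M > 0, and a sequence M_n ≥ 0 with lim_{n→∞} M_n n^γ = M. If γ < 2(α+2j+1), then for every fixed k ∈ ℕ, lim_{n→∞} Q_n^{(k)}(1)/(P_n^{(α,β)})^{(k)}(1) = (k−j)/(α+j+k+1). -/

import Mathlib

open Polynomial Filter

/-- The Jacobi polynomial `P_n^{(α,β)}` as a real polynomial. -/
noncomputable def jacobiP (α β : ℝ) (n : ℕ) : Polynomial ℝ :=
  ∑ k ∈ Finset.range (n + 1),
    Polynomial.C (Real.Gamma (n + α + 1) / (Real.Gamma ((n : ℝ) - k + 1) * Real.Gamma (α + k + 1)) *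
        (Real.Gamma (n + β + 1) / (Real.Gamma ((k : ℝ) + 1) * Real.Gamma ((n : ℝ) - k + β + 1)))) *
      (Polynomial.C (2⁻¹ : ℝ) * (Polynomial.X - 1)) ^ k *
      (Polynomial.C (2⁻¹ : ℝ) * (Polynomial.X + 1)) ^ (n - k)

/-- The squared Jacobi norm `‖P_n^{(α,β)}‖²`. -/
noncomputable def jacobiNormSq (α β : ℝ) (n : ℕ) : ℝ :=
  ∫ x in (-1 : ℝ)..1, (jacobiP α β n).eval x ^ 2 * (1 - x) ^ α * (1 + x) ^ β

/-- The kernel `K_n^{(j,k)}(x,y)`. -/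
noncomputable def kernK (α β : ℝ) (j k n : ℕ) (x y : ℝ) : ℝ :=
  ∑ i ∈ Finset.range (n + 1),
    (Polynomial.derivative^[j] (jacobiP α β i)).eval x *
      (Polynomial.derivative^[k] (jacobiP α β i)).eval y / jacobiNormSq α β i

/-- The kernel `K_n^{(j,0)}(1,·)` as a polynomial. -/
noncomputable def kernKPoly (α β : ℝ) (j n : ℕ) : Polynomial ℝ :=
  ∑ i ∈ Finset.range (n + 1),
    Polynomial.C ((Polynomial.derivative^[j] (jacobiP α β i)).eval 1 / jacobiNormSq α β i) *
      jacobiP α β i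

/-- The varying Sobolev inner product `(f,g)_{S,n}` with mass `m`. -/
noncomputable def sobInner (α β : ℝ) (j : ℕ) (m : ℝ) (f g : Polynomial ℝ) : ℝ :=
  (∫ x in (-1 : ℝ)..1, f.eval x * g.eval x * (1 - x) ^ α * (1 + x) ^ β) +
    m * (Polynomial.derivative^[j] f).eval 1 * (Polynomial.derivative^[j] g).eval 1

/-- The Jacobi–Sobolev orthogonal polynomial `Q_n`. -/
noncomputable def sobQ (α β : ℝ) (j : ℕ) (Ms : ℕ → ℝ) (n : ℕ) : Polynomial ℝ :=
  jacobiP α β n -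
    Polynomial.C (Ms n * (Polynomial.derivative^[j] (jacobiP α β n)).eval 1 /
        (1 + Ms n * kernK α β j j (n - 1) 1 1)) *
      kernKPoly α β j (n - 1)


lemma aux_beta {a b : ℝ} (ha : 0 < a) (hb : 0 < b) :
    IntervalIntegrable (fun x : ℝ => x ^ (a - 1) * (1 - x) ^ (b - 1)) MeasureTheory.volume 0 1 ∧
    ∫ x in (0 : ℝ)..1, x ^ (a - 1) * (1 - x) ^ (b - 1) =
      Real.Gamma a * Real.Gamma b / Real.Gamma (a + b) := by
  have hc := Complex.betaIntegral_convergent (u := a) (v := b) (by simpa) (by simpa)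
  have hEq : ∀ x ∈ Set.Ioc (0 : ℝ) 1, ((x : ℂ) ^ ((a : ℂ) - 1) * (1 - (x : ℂ)) ^ ((b : ℂ) - 1)) =
      ((x ^ (a - 1) * (1 - x) ^ (b - 1) : ℝ) : ℂ) := by
    intro x hx
    have h1 : 0 ≤ x := hx.1.le
    have h2 : 0 ≤ 1 - x := by linarith [hx.2]
    rw [Complex.ofReal_mul, Complex.ofReal_cpow h1, Complex.ofReal_cpow h2]
    push_cast
    rfl
  have huI : Set.uIoc (0 : ℝ) 1 = Set.Ioc 0 1 := Set.uIoc_of_le zero_le_one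
  have hc2 : IntervalIntegrable (fun x : ℝ => ((x ^ (a - 1) * (1 - x) ^ (b - 1) : ℝ) : ℂ))
      MeasureTheory.volume 0 1 := by
    refine hc.congr ?_
    intro x hx
    rw [huI] at hx
    exact hEq x hx
  constructor
  · rw [intervalIntegrable_iff] at hc2 ⊢
    exact hc2.re
  · have h3 := Complex.betaIntegral_eq_Gamma_mul_div a b (by simpa) (by simpa)
    rw [Complex.betaIntegral, intervalIntegral.integral_congr_ae (g := fun x : ℝ =>
      ((x ^ (a - 1) * (1 - x) ^ (b - 1) : ℝ) : ℂ))
      (Filter.Eventually.of_forall fun x hx => hEq x (huI ▸ hx)),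
      intervalIntegral.integral_ofReal, ← Complex.ofReal_add, Complex.Gamma_ofReal,
      Complex.Gamma_ofReal, Complex.Gamma_ofReal] at h3
    exact_mod_cast h3

noncomputable def wInt (α β : ℝ) (f : Polynomial ℝ) : ℝ :=
  ∫ x in (-1 : ℝ)..1, f.eval x * ((1 - x) ^ α * (1 + x) ^ β)

lemma weight_subst (α β : ℝ) {t : ℝ} (ht : t ∈ Set.Ioc (0 : ℝ) 1) :
    (1 - (2 * t - 1)) ^ α * (1 + (2 * t - 1)) ^ β =
      2 ^ (α + β) * (t ^ β * (1 - t) ^ α) := by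
  have h1 : 0 ≤ t := ht.1.le
  have h2 : 0 ≤ 1 - t := by linarith [ht.2]
  rw [show 1 - (2 * t - 1) = 2 * (1 - t) by ring, show 1 + (2 * t - 1) = 2 * t by ring,
    Real.mul_rpow (by norm_num) h1, Real.mul_rpow (by norm_num) h2, Real.rpow_add (by norm_num)]
  ring

lemma weight_int {α β : ℝ} (hα : -1 < α) (hβ : -1 < β) :
    IntervalIntegrable (fun x : ℝ => (1 - x) ^ α * (1 + x) ^ β) MeasureTheory.volume (-1) 1 := by
  have h := (aux_beta (a := β + 1) (b := α + 1) (by linarith) (by linarith)).1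
  simp only [add_sub_cancel_right] at h
  have h2 := h.const_mul (2 ^ (α + β))
  have h3 : IntervalIntegrable (fun t : ℝ => (1 - (2 * t - 1)) ^ α * (1 + (2 * t - 1)) ^ β)
      MeasureTheory.volume 0 1 := by
    refine h2.congr ?_
    intro t ht
    rw [Set.uIoc_of_le zero_le_one] at ht
    exact (weight_subst α β ht).symm
  have h4 := (h3.comp_mul_left (c := 2⁻¹)).comp_add_right 1
  refine (h4.congr ?_).mono_set ?_
  · intro x _
    dsimp only
    congr 2 <;> ring
  · norm_num

lemma wInt_int {α β : ℝ} (hα : -1 < α) (hβ : -1 < β) (f : Polynomial ℝ) :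
    IntervalIntegrable (fun x : ℝ => f.eval x * ((1 - x) ^ α * (1 + x) ^ β))
      MeasureTheory.volume (-1) 1 :=
  (weight_int hα hβ).continuousOn_mul f.continuous.continuousOn

lemma wInt_sum {α β : ℝ} (hα : -1 < α) (hβ : -1 < β) {ι : Type} (s : Finset ι) (c : ι → ℝ)
    (f : ι → Polynomial ℝ) :
    wInt α β (∑ i ∈ s, C (c i) * f i) = ∑ i ∈ s, c i * wInt α β (f i) := by
  unfold wInt
  simp_rw [← intervalIntegral.integral_const_mul]
  rw [← intervalIntegral.integral_finsetSum]
  · congr 1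
    ext x
    simp [Polynomial.eval_finsetSum, Finset.sum_mul, mul_assoc]
  · intro i _
    exact (wInt_int hα hβ (f i)).const_mul _

noncomputable def WW : Polynomial ℝ := Polynomial.C (2⁻¹ : ℝ) * (Polynomial.X - 1)
noncomputable def VV : Polynomial ℝ := Polynomial.C (2⁻¹ : ℝ) * (Polynomial.X + 1)

lemma wInt_mono {α β : ℝ} (hα : -1 < α) (hβ : -1 < β) (p q : ℕ) :
    wInt α β (WW ^ p * VV ^ q) = (-1) ^ p * (2 ^ (α + β + 1) *
      (Real.Gamma (α + p + 1) * Real.Gamma (β + q + 1) / Real.Gamma (α + β + p + q + 2))) := by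
  have hp : (0 : ℝ) ≤ p := p.cast_nonneg
  have hq : (0 : ℝ) ≤ q := q.cast_nonneg
  have h := (aux_beta (a := β + q + 1) (b := α + p + 1) (by linarith) (by linarith)).2
  simp only [add_sub_cancel_right] at h
  unfold wInt
  have hs := intervalIntegral.smul_integral_comp_mul_sub (a := 0) (b := 1)
    (f := fun x : ℝ => (WW ^ p * VV ^ q).eval x * ((1 - x) ^ α * (1 + x) ^ β)) 2 1
  norm_num at hs
  norm_num
  rw [← hs]
  have : ∫ (x : ℝ) in 0..1, (eval (2 * x - 1) WW) ^ p * (eval (2 * x - 1) VV) ^ q *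
      ((1 - (2 * x - 1)) ^ α * (2 * x) ^ β) =
      ∫ x in (0:ℝ)..1, (-1) ^ p * 2 ^ (α + β) * (x ^ (β + q) * (1 - x) ^ (α + p)) := by
    apply intervalIntegral.integral_congr_ae
    have h1 : ∀ᵐ x : ℝ, x ≠ 1 := by
      simp [MeasureTheory.ae_iff]
    filter_upwards [h1] with x hx1 hx
    rw [Set.uIoc_of_le zero_le_one] at hx
    have hw := weight_subst α β hx
    rw [show 1 + (2 * x - 1) = 2 * x by ring] at hw
    have hx2 : 0 < 1 - x := by have := lt_of_le_of_ne hx.2 hx1; linarith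
    rw [hw, Real.rpow_add hx.1, Real.rpow_add hx2,
      Real.rpow_natCast, Real.rpow_natCast]
    have e1 : eval (2 * x - 1) WW = (-1) * (1 - x) := by simp [WW]; ring
    have e2 : eval (2 * x - 1) VV = x := by simp [VV]
    rw [e1, e2, mul_pow]
    ring
  rw [this, intervalIntegral.integral_const_mul, h, Real.rpow_add_one (by norm_num),
    show β + q + 1 + (α + p + 1) = α + β + p + q + 2 by ring]
  ring

lemma choose_step (x : ℝ) (n : ℕ) :
    ((n + 1).factorial : ℝ) * Ring.choose x (n + 1) = (x - n) * (n.factorial * Ring.choose x n) := by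
  have h1 := Ring.descPochhammer_eq_factorial_smul_choose x n
  have h2 := Ring.descPochhammer_eq_factorial_smul_choose x (n + 1)
  rw [nsmul_eq_mul] at h1 h2
  rw [← h1, ← h2, descPochhammer_succ_right, Polynomial.smeval_mul, Polynomial.smeval_sub,
    Polynomial.smeval_X, Polynomial.smeval_natCast]
  simp
  ring

lemma gamma_choose (x : ℝ) (n : ℕ) (h : 0 < x - n + 1) :
    Real.Gamma (x + 1) = n.factorial * Ring.choose x n * Real.Gamma (x - n + 1) := by
  induction n with
  | zero => simp
  | succ n ih =>
    push_cast at h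
    have h0 : 0 < x - n := by linarith
    rw [ih (by linarith), choose_step, Real.Gamma_add_one h0.ne']
    push_cast
    rw [show x - (n + 1) + 1 = x - n by ring]
    ring

lemma gamma_asc (y : ℝ) (hy : 0 < y) (m : ℕ) :
    Real.Gamma (y + m) = (ascPochhammer ℝ m).eval y * Real.Gamma y := by
  induction m with
  | zero => simp
  | succ m ih =>
    have : 0 < y + m := by positivity
    rw [ascPochhammer_succ_right]
    push_cast
    rw [← add_assoc, Real.Gamma_add_one this.ne', ih]
    simp
    ring

noncomputable def jA (α β : ℝ) (n k : ℕ) : ℝ :=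
  Real.Gamma (n + α + 1) / (Real.Gamma ((n : ℝ) - k + 1) * Real.Gamma (α + k + 1)) *
    (Real.Gamma (n + β + 1) / (Real.Gamma ((k : ℝ) + 1) * Real.Gamma ((n : ℝ) - k + β + 1)))

noncomputable def jC (α β : ℝ) (n m : ℕ) : ℝ :=
  Real.Gamma (n + α + 1) / (Real.Gamma ((n : ℝ) - m + 1) * Real.Gamma (α + m + 1)) *
    Ring.choose (n + α + β + m) m

lemma jacobiP_eq (α β : ℝ) (n : ℕ) : jacobiP α β n =
    ∑ k ∈ Finset.range (n + 1), C (jA α β n k) * (WW ^ k * VV ^ (n - k)) := by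
  unfold jacobiP jA WW VV
  refine Finset.sum_congr rfl fun k _ => ?_
  rw [mul_assoc]

lemma gamma_nat_sub {n k : ℕ} (h : k ≤ n) :
    Real.Gamma ((n : ℝ) - k + 1) = (n - k).factorial := by
  rw [← Nat.cast_sub h, Real.Gamma_nat_eq_factorial]

lemma jA_choose {α β : ℝ} (hα : -1 < α) (hβ : -1 < β) {n m k : ℕ} (hm : m ≤ n) (hk : k ≤ m) :
    jA α β n k * ((n - k).choose (m - k) : ℕ) =
    Real.Gamma (n + α + 1) / (Real.Gamma ((n : ℝ) - m + 1) * Real.Gamma (α + m + 1)) *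
      (Ring.choose (n + β) k * Ring.choose (α + m) (m - k)) := by
  have hmk : (0 : ℝ) ≤ (m : ℝ) - k := by simpa using hk
  have hnk : (0 : ℝ) ≤ (n : ℝ) - k := by simpa using hk.trans hm
  have hk0 : (0 : ℝ) ≤ k := k.cast_nonneg
  have hm0 : (0 : ℝ) ≤ m := m.cast_nonneg
  have g1 := gamma_choose (n + β) k (by linarith)
  have g2 := gamma_choose (α + m) (m - k) (by rw [Nat.cast_sub hk]; linarith)
  rw [Nat.cast_sub hk, show α + m - (m - k) + 1 = α + k + 1 by ring] at g2
  rw [show (n : ℝ) + β - k + 1 = n - k + β + 1 by ring] at g1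
  have p1 : 0 < Real.Gamma (α + k + 1) := Real.Gamma_pos_of_pos (by linarith)
  have p2 : 0 < Real.Gamma (n - k + β + 1) := Real.Gamma_pos_of_pos (by linarith)
  have p3 : 0 < Real.Gamma (α + m + 1) := Real.Gamma_pos_of_pos (by linarith)
  rw [g2] at p3
  unfold jA
  rw [g1, g2, gamma_nat_sub hm, gamma_nat_sub (hk.trans hm), Real.Gamma_nat_eq_factorial]
  have hc : ((n - k).choose (m - k) * (m - k).factorial * (n - m).factorial : ℝ)
      = (n - k).factorial := by
    have := Nat.choose_mul_factorial_mul_factorial (n := n - k) (k := m - k) (by omega)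
    rw [show n - k - (m - k) = n - m by omega] at this
    exact_mod_cast this
  have f1 : ((n - k).factorial : ℝ) ≠ 0 := by positivity
  have f2 : ((n - m).factorial : ℝ) ≠ 0 := by positivity
  have f3 : (k.factorial : ℝ) ≠ 0 := by positivity
  have f4 : ((m - k).factorial : ℝ) ≠ 0 := by positivity
  have f5 : Ring.choose (α + m) (m - k) ≠ 0 := by
    intro h; rw [h] at p3; simp at p3
  rw [← hc] at f1 ⊢
  have f6 : ((n - k).choose (m - k) : ℝ) ≠ 0 := by
    intro h; rw [h] at f1; simp at f1
  field_simp

lemma jacobiP_taylor {α β : ℝ} (hα : -1 < α) (hβ : -1 < β) (n : ℕ) : jacobiP α β n =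
    ∑ m ∈ Finset.range (n + 1), C (jC α β n m) * WW ^ m := by
  rw [jacobiP_eq]
  have hV : VV = WW + 1 := by
    unfold VV WW
    have : (1 : ℝ[X]) = C (2⁻¹ : ℝ) * 2 := by
      rw [show (2 : ℝ[X]) = C 2 from rfl, ← C_mul]; norm_num
    linear_combination -this
  have h1 : ∀ k ∈ Finset.range (n + 1), C (jA α β n k) * (WW ^ k * VV ^ (n - k)) =
      ∑ m ∈ Finset.Ico k (n + 1), C (jA α β n k * ((n - k).choose (m - k) : ℕ)) * WW ^ m := by
    intro k hk
    have hk' : k ≤ n := by simpa [Nat.lt_succ_iff] using hk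
    rw [hV, add_pow, Finset.sum_Ico_eq_sum_range, show n + 1 - k = n - k + 1 by omega,
      Finset.mul_sum, Finset.mul_sum]
    refine Finset.sum_congr rfl fun l _ => ?_
    simp only [one_pow, mul_one, Nat.add_sub_cancel_left, C_mul, pow_add]
    simp
    ring
  rw [Finset.sum_congr rfl h1, Finset.sum_comm' (t' := Finset.range (n + 1))
    (s' := fun m => Finset.range (m + 1)) (by intro x y; simp; omega)]
  refine Finset.sum_congr rfl fun m hm => ?_
  have hm' : m ≤ n := by simpa [Nat.lt_succ_iff] using hm
  rw [← Finset.sum_mul, ← map_sum]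
  congr 2
  have h2 : ∀ k ∈ Finset.range (m + 1), jA α β n k * ((n - k).choose (m - k) : ℕ) = _ :=
    fun k hk => jA_choose hα hβ hm' (by simpa [Nat.lt_succ_iff] using hk)
  rw [Finset.sum_congr rfl h2, ← Finset.mul_sum]
  unfold jC
  rw [show (n : ℝ) + α + β + m = (n + β) + (α + m) by ring,
    Ring.add_choose_eq m (Commute.all _ _), Finset.Nat.sum_antidiagonal_eq_sum_range_succ
      (fun a b => Ring.choose ((n : ℝ) + β) a * Ring.choose (α + m) b)]

lemma jacobiP_deriv {α β : ℝ} (hα : -1 < α) (hβ : -1 < β) {n k : ℕ} (hk : k ≤ n) :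
    (derivative^[k] (jacobiP α β n)).eval 1 = jC α β n k * (k.factorial * (2⁻¹) ^ k) := by
  rw [jacobiP_taylor hα hβ, Polynomial.iterate_derivative_sum, Polynomial.eval_finsetSum,
    Finset.sum_eq_single k]
  · rw [WW, mul_pow, ← C_pow, ← mul_assoc, ← C_mul, Polynomial.iterate_derivative_C_mul,
      show (1 : ℝ[X]) = C 1 from rfl, Polynomial.iterate_derivative_X_sub_pow_self]
    simp
    ring
  · intro m _ hmk
    rw [WW, mul_pow, ← C_pow, ← mul_assoc, ← C_mul, Polynomial.iterate_derivative_C_mul,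
      show (1 : ℝ[X]) = C 1 from rfl, Polynomial.iterate_derivative_X_sub_pow]
    rcases lt_or_gt_of_ne hmk with h | h
    · simp [Nat.descFactorial_of_lt h]
    · have : m - k ≠ 0 := by omega
      simp [this]
  · intro h; exfalso; apply h; simp; omega

lemma asc_diff (y : ℝ) {n m : ℕ} (hm : m ≤ n) :
    ∑ k ∈ Finset.range (n + 1), (-1 : ℝ) ^ k * (n.choose k : ℝ) * (ascPochhammer ℝ m).eval (y + k)
      = if m = n then (-1) ^ n * (n.factorial : ℝ) else 0 := by
  have h := fwdDiff_iter_eq_sum_shift (1 : ℝ) (ascPochhammer ℝ m).eval n y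
  have h2 : ∑ k ∈ Finset.range (n + 1),
      (-1 : ℝ) ^ k * (n.choose k : ℝ) * (ascPochhammer ℝ m).eval (y + k) =
      (-1) ^ n * (fwdDiff (1 : ℝ))^[n] (ascPochhammer ℝ m).eval y := by
    rw [h, Finset.mul_sum]
    refine Finset.sum_congr rfl fun k hk => ?_
    have hk' : k ≤ n := by simpa [Nat.lt_succ_iff] using hk
    have hs : (-1 : ℝ) ^ k = (-1) ^ n * (-1) ^ (n - k) := by
      rw [← pow_add, show n + (n - k) = 2 * (n - k) + k by omega, pow_add, pow_mul]
      simp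
    rw [hs]
    simp
    ring
  have hd : (ascPochhammer ℝ m).natDegree = m := ascPochhammer_natDegree ℝ m
  rw [h2]
  split_ifs with hmn
  · subst hmn
    have h3 := Polynomial.fwdDiff_iter_degree_eq_factorial (ascPochhammer ℝ m)
    rw [hd, (monic_ascPochhammer ℝ m).leadingCoeff] at h3
    rw [h3]
    simp
  · rw [Polynomial.fwdDiff_iter_eq_zero_of_degree_lt (by rw [hd]; omega)]
    simp

noncomputable def hN (α β : ℝ) (n : ℕ) : ℝ :=
  2 ^ (α + β + 1) * (Real.Gamma (n + α + 1) * Real.Gamma (n + β + 1) /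
    Real.Gamma (α + β + 2 * n + 2))

lemma wInt_jacobi {α β : ℝ} (hα : -1 < α) (hβ : -1 < β) {n m : ℕ} (hm : m ≤ n) :
    wInt α β (jacobiP α β n * WW ^ m) = if m = n then hN α β n else 0 := by
  have e : jacobiP α β n * WW ^ m =
      ∑ k ∈ Finset.range (n + 1), C (jA α β n k) * (WW ^ (k + m) * VV ^ (n - k)) := by
    rw [jacobiP_eq, Finset.sum_mul]
    refine Finset.sum_congr rfl fun k _ => ?_
    rw [pow_add]; ring
  rw [e, wInt_sum hα hβ]
  have h : ∀ k ∈ Finset.range (n + 1), jA α β n k * wInt α β (WW ^ (k + m) * VV ^ (n - k)) =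
      ((-1) ^ m * (2 ^ (α + β + 1) * (Real.Gamma (n + α + 1) * Real.Gamma (n + β + 1) /
        Real.Gamma (α + β + n + m + 2))) / n.factorial) *
      ((-1 : ℝ) ^ k * (n.choose k : ℝ) * (ascPochhammer ℝ m).eval (α + 1 + k)) := by
    intro k hk
    have hk' : k ≤ n := by simpa [Nat.lt_succ_iff] using hk
    have hk0 : (0 : ℝ) ≤ k := k.cast_nonneg
    have hnk : (0 : ℝ) ≤ (n : ℝ) - k := by simpa using hk'
    have ga := gamma_asc (α + 1 + k) (by linarith) m
    rw [wInt_mono hα hβ]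
    unfold jA
    push_cast [Nat.cast_sub hk']
    rw [show α + ((k : ℝ) + m) + 1 = α + 1 + k + m by ring, ga,
      show β + ((n : ℝ) - k) + 1 = n - k + β + 1 by ring,
      show α + β + ((k : ℝ) + m) + (n - k) + 2 = α + β + n + m + 2 by ring,
      show α + (k : ℝ) + 1 = α + 1 + k by ring, gamma_nat_sub hk', Real.Gamma_nat_eq_factorial]
    have p1 := (Real.Gamma_pos_of_pos (s := α + 1 + k) (by linarith)).ne'
    have p2 := (Real.Gamma_pos_of_pos (s := n - k + β + 1) (by linarith)).ne'
    have hc : (n.choose k * k.factorial * (n - k).factorial : ℝ) = n.factorial := by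
      exact_mod_cast Nat.choose_mul_factorial_mul_factorial hk'
    have f1 : ((n - k).factorial : ℝ) ≠ 0 := by positivity
    have f3 : (k.factorial : ℝ) ≠ 0 := by positivity
    have f2 : (n.factorial : ℝ) ≠ 0 := by positivity
    rw [pow_add]
    rw [← hc] at f2 ⊢
    have f6 : (n.choose k : ℝ) ≠ 0 := by
      intro h; rw [h] at f2; simp at f2
    field_simp
  rw [Finset.sum_congr rfl h, ← Finset.mul_sum, asc_diff _ hm]
  split_ifs with hmn
  · subst hmn
    unfold hN
    rw [show α + β + 2 * (m : ℝ) + 2 = α + β + m + m + 2 by ring]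
    have f2 : (m.factorial : ℝ) ≠ 0 := by positivity
    have hs : (-1 : ℝ) ^ m * (-1) ^ m = 1 := by rw [← mul_pow]; simp
    field_simp
    linear_combination (Real.Gamma (m + α + 1) * Real.Gamma (m + β + 1) /
      Real.Gamma (α + β + m + m + 2)) * hs
  · simp

lemma jacobiNormSq_eq {α β : ℝ} (hα : -1 < α) (hβ : -1 < β) (n : ℕ) :
    jacobiNormSq α β n = jC α β n n * hN α β n := by
  have h0 : jacobiNormSq α β n = wInt α β (jacobiP α β n * jacobiP α β n) := by
    unfold jacobiNormSq wInt
    congr 1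
    ext x
    rw [eval_mul]; ring
  have h1 : jacobiP α β n * jacobiP α β n =
      ∑ m ∈ Finset.range (n + 1), C (jC α β n m) * (jacobiP α β n * WW ^ m) := by
    nth_rw 2 [jacobiP_taylor hα hβ]
    rw [Finset.mul_sum]
    refine Finset.sum_congr rfl fun m _ => ?_
    ring
  rw [h0, h1, wInt_sum hα hβ, Finset.sum_eq_single n]
  · rw [wInt_jacobi hα hβ le_rfl, if_pos rfl]
  · intro m hm hmn
    have hm' : m ≤ n := by simpa [Nat.lt_succ_iff] using hm
    rw [wInt_jacobi hα hβ hm', if_neg hmn, mul_zero]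
  · intro h; exfalso; apply h; simp


lemma gamma_ratio_pos (a : ℝ) (ha : -1 < a) :
    Tendsto (fun n : ℕ => Real.Gamma (n + a + 1) / (n.factorial * (n : ℝ) ^ a)) atTop (nhds 1) := by
  have h := Real.GammaSeq_tendsto_Gamma (a + 1)
  have hG := Real.Gamma_pos_of_pos (s := a + 1) (by linarith)
  have h2 := (tendsto_const_nhds (x := Real.Gamma (a + 1))).div h hG.ne'
  rw [div_self hG.ne'] at h2
  have h3 : Tendsto (fun n : ℕ => (n : ℝ) / (n + (a + 1))) atTop (nhds 1) :=
    tendsto_natCast_div_add_atTop (a + 1)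
  have h4 := h2.mul h3
  rw [mul_one] at h4
  refine h4.congr' ?_
  filter_upwards [eventually_gt_atTop 0] with n hn
  have hn' : (0 : ℝ) < n := by exact_mod_cast hn
  have hp : ∀ N : ℕ, ∏ j ∈ Finset.range N, (a + 1 + (j : ℝ)) = (ascPochhammer ℝ N).eval (a + 1) := by
    intro N
    induction N with
    | zero => simp
    | succ N ih => rw [Finset.prod_range_succ, ih, ascPochhammer_succ_right]; simp
  have hg := gamma_asc (a + 1) (by linarith) n
  simp only [Pi.div_apply, Real.GammaSeq]
  rw [Finset.prod_range_succ, hp, show (n : ℝ) + a + 1 = a + 1 + n by ring, hg,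
    Real.rpow_add_one hn'.ne']
  have : (n : ℝ) ^ a ≠ 0 := (Real.rpow_pos_of_pos hn' a).ne'
  have h5 : (n : ℝ) + (a + 1) ≠ 0 := by linarith
  have f2 : (n.factorial : ℝ) ≠ 0 := by positivity
  rw [show a + 1 + (n : ℝ) = n + (a + 1) by ring]
  field_simp

lemma gamma_ratio (a : ℝ) :
    Tendsto (fun n : ℕ => Real.Gamma (n + a + 1) / (n.factorial * (n : ℝ) ^ a)) atTop (nhds 1) := by
  have key : ∀ (N : ℕ) (a : ℝ), -1 < a + N →
    Tendsto (fun n : ℕ => Real.Gamma (n + a + 1) / (n.factorial * (n : ℝ) ^ a)) atTop (nhds 1) := by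
    intro N
    induction N with
    | zero => intro a ha; exact gamma_ratio_pos a (by simpa using ha)
    | succ N ih =>
      intro a ha
      push_cast at ha
      have h1 := ih (a + 1) (by linarith)
      have h3 : Tendsto (fun n : ℕ => (n : ℝ) / (n + (a + 1))) atTop (nhds 1) :=
        tendsto_natCast_div_add_atTop (a + 1)
      have h4 := h1.mul h3
      rw [mul_one] at h4
      refine h4.congr' ?_
      filter_upwards [eventually_gt_atTop 0,
        (tendsto_natCast_atTop_atTop (R := ℝ)).eventually_gt_atTop (-(a + 1))] with n hn hn2
      have hn' : (0 : ℝ) < n := by exact_mod_cast hn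
      have h5 : (n : ℝ) + (a + 1) ≠ 0 := by linarith
      have h6 : (n : ℝ) + a + 1 ≠ 0 := by linarith
      rw [show (n : ℝ) + (a + 1) + 1 = n + a + 1 + 1 by ring, Real.Gamma_add_one h6,
        Real.rpow_add_one hn'.ne']
      have : (n : ℝ) ^ a ≠ 0 := (Real.rpow_pos_of_pos hn' a).ne'
      have f2 : (n.factorial : ℝ) ≠ 0 := by positivity
      rw [show (n : ℝ) + (a + 1) = n + a + 1 by ring]
      field_simp
  obtain ⟨N, hN⟩ := exists_nat_gt (-1 - a)
  exact key N a (by linarith)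

noncomputable def gR (a : ℝ) (n : ℕ) : ℝ := Real.Gamma (n + a + 1) / (n.factorial * (n : ℝ) ^ a)

lemma gR_tendsto (a : ℝ) : Tendsto (gR a) atTop (nhds 1) := gamma_ratio a

lemma gR_eq (a : ℝ) {n : ℕ} (hn : 0 < n) :
    Real.Gamma (n + a + 1) = gR a n * (n.factorial * (n : ℝ) ^ a) := by
  have hn' : (0 : ℝ) < n := by exact_mod_cast hn
  have := Real.rpow_pos_of_pos hn' a
  unfold gR
  field_simp

lemma ev_gt (b : ℝ) : ∀ᶠ n : ℕ in atTop, b < (n : ℝ) :=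
  (tendsto_natCast_atTop_atTop (R := ℝ)).eventually_gt_atTop b

lemma jC_tendsto {α β : ℝ} (hα : -1 < α) (k : ℕ) :
    Tendsto (fun n : ℕ => jC α β n k * k.factorial / (n : ℝ) ^ (α + 2 * k)) atTop
      (nhds (1 / Real.Gamma (α + k + 1))) := by
  have h := (((gR_tendsto α).div (gR_tendsto (-k)) one_ne_zero).mul
    ((gR_tendsto (α + β + k)).div (gR_tendsto (α + β)) one_ne_zero)).div_const
      (Real.Gamma (α + k + 1))
  norm_num at h
  rw [one_div]
  refine h.congr' ?_
  filter_upwards [eventually_gt_atTop 0, ev_gt (-(α + β + 1)), eventually_ge_atTop k]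
    with n hn hn2 hk
  have hn' : (0 : ℝ) < n := by exact_mod_cast hn
  have hk0 : (0 : ℝ) ≤ k := k.cast_nonneg
  have gc := gamma_choose (n + α + β + k) k (by linarith)
  rw [show (n : ℝ) + α + β + k - k + 1 = n + (α + β) + 1 by ring,
    show (n : ℝ) + α + β + k + 1 = n + (α + β + k) + 1 by ring] at gc
  have gp : 0 < Real.Gamma (n + (α + β) + 1) := Real.Gamma_pos_of_pos (by linarith)
  have hch : Ring.choose (n + α + β + k) k * k.factorial =
      Real.Gamma (n + (α + β + k) + 1) / Real.Gamma (n + (α + β) + 1) := by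
    rw [gc]; field_simp
  have gq : 0 < Real.Gamma (n + (-k : ℝ) + 1) := Real.Gamma_pos_of_pos (by
    have : (k : ℝ) ≤ n := by exact_mod_cast hk
    linarith)
  unfold jC
  rw [mul_assoc, hch, show (n : ℝ) - k + 1 = n + (-k) + 1 by ring]
  rw [gR_eq _ hn] at gp gq
  rw [gR_eq α hn, gR_eq (-k) hn, gR_eq (α + β + k) hn, gR_eq (α + β) hn]
  have e1 : (n : ℝ) ^ (α + 2 * k) = n ^ α * ((n : ℝ) ^ (k : ℝ) * (n : ℝ) ^ (k : ℝ)) := by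
    rw [← Real.rpow_add hn', ← Real.rpow_add hn']; congr 1; ring
  have e2 : (n : ℝ) ^ (α + β + k) = n ^ (α + β) * (n : ℝ) ^ (k : ℝ) := by
    rw [← Real.rpow_add hn']
  have e3 : (n : ℝ) ^ (-k : ℝ) = ((n : ℝ) ^ (k : ℝ))⁻¹ := Real.rpow_neg hn'.le _
  have q1 := (Real.rpow_pos_of_pos hn' (α + β)).ne'
  have q2 := (Real.rpow_pos_of_pos hn' (k : ℝ)).ne'
  have q3 := (Real.rpow_pos_of_pos hn' α).ne'
  have f2 : (n.factorial : ℝ) ≠ 0 := by positivity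
  have r1 : gR (α + β) n ≠ 0 := by intro h; rw [h] at gp; simp at gp
  have r2 : gR (-k) n ≠ 0 := by intro h; rw [h] at gq; simp at gq
  have p1 : Real.Gamma (α + k + 1) ≠ 0 := (Real.Gamma_pos_of_pos (by linarith)).ne'
  rw [e1, e2, e3]
  field_simp

noncomputable def dK (α : ℝ) (k : ℕ) : ℝ := 1 / Real.Gamma (α + k + 1) * (2⁻¹) ^ k

lemma dK_pos {α : ℝ} (hα : -1 < α) (k : ℕ) : 0 < dK α k := by
  have hk0 : (0 : ℝ) ≤ k := k.cast_nonneg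
  have p1 := Real.Gamma_pos_of_pos (s := α + k + 1) (by linarith)
  unfold dK; positivity

lemma deriv_tendsto {α β : ℝ} (hα : -1 < α) (hβ : -1 < β) (k : ℕ) :
    Tendsto (fun n : ℕ => (derivative^[k] (jacobiP α β n)).eval 1 / (n : ℝ) ^ (α + 2 * k)) atTop
      (nhds (dK α k)) := by
  refine ((jC_tendsto (β := β) hα k).mul_const ((2⁻¹) ^ k)).congr' ?_
  filter_upwards [eventually_ge_atTop k] with n hk
  rw [jacobiP_deriv hα hβ hk]
  ring

lemma norm_tendsto {α β : ℝ} (hα : -1 < α) (hβ : -1 < β) :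
    Tendsto (fun n : ℕ => jacobiNormSq α β n * n) atTop (nhds (2 ^ (α + β))) := by
  have h3 : Tendsto (fun n : ℕ => (n : ℝ) / (n + ((α + β + 1) / 2))) atTop (nhds 1) :=
    tendsto_natCast_div_add_atTop _
  have h := (((gR_tendsto α).mul (gR_tendsto β)).div (gR_tendsto (α + β)) one_ne_zero).mul
    (h3.const_mul (2 ^ (α + β)))
  norm_num at h
  refine h.congr' ?_
  filter_upwards [eventually_gt_atTop 0, ev_gt (-(α + β + 1)), ev_gt (-(α + β + 1) / 2)]
    with n hn hn2 hn3
  have hn' : (0 : ℝ) < n := by exact_mod_cast hn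
  rw [jacobiNormSq_eq hα hβ]
  have gc := gamma_choose (n + α + β + n) n (by linarith)
  have hs : (n : ℝ) + α + β + n + 1 ≠ 0 := by linarith
  have g2 : Real.Gamma (α + β + 2 * n + 2) =
      (n + α + β + n + 1) * Real.Gamma (n + α + β + n + 1) := by
    rw [← Real.Gamma_add_one hs]; congr 1; ring
  rw [show (n : ℝ) + α + β + n - n + 1 = n + (α + β) + 1 by ring] at gc
  have gp : 0 < Real.Gamma (n + α + β + n + 1) := Real.Gamma_pos_of_pos (by linarith)
  have ga : 0 < Real.Gamma (n + α + 1) := Real.Gamma_pos_of_pos (by linarith)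
  unfold jC hN
  rw [g2]
  rw [gc] at gp ⊢
  rw [sub_self, zero_add, Real.Gamma_one, show α + (n : ℝ) + 1 = n + α + 1 by ring]
  rw [gR_eq (α + β) hn] at gp ⊢
  rw [gR_eq α hn] at ga ⊢
  rw [gR_eq β hn]
  have q1 := (Real.rpow_pos_of_pos hn' β).ne'
  have q3 := (Real.rpow_pos_of_pos hn' α).ne'
  have f2 : (n.factorial : ℝ) ≠ 0 := by positivity
  have r1 : gR (α + β) n ≠ 0 := by intro h; rw [h] at gp; simp at gp
  have r3 : Ring.choose (n + α + β + n) n ≠ 0 := by intro h; rw [h] at gp; simp at gp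
  have r2 : gR α n ≠ 0 := by intro h; rw [h] at ga; simp at ga
  have hs2 : (n : ℝ) + (α + β + 1) / 2 ≠ 0 := by linarith
  have hs3 : (n : ℝ) + α + β + n + 1 = 2 * (n + (α + β + 1) / 2) := by ring
  rw [Real.rpow_add_one (by norm_num), Real.rpow_add hn', hs3]
  generalize (n : ℝ) + (α + β + 1) / 2 = s at *
  field_simp

lemma sum_asym {f : ℕ → ℝ} {p c : ℝ} (hp : 0 < p)
    (hf : Tendsto (fun n : ℕ => f n / (n : ℝ) ^ (p - 1)) atTop (nhds c)) :
    Tendsto (fun n : ℕ => (∑ i ∈ Finset.range n, f i) / (n : ℝ) ^ p) atTop (nhds (c / p)) := by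
  set g : ℕ → ℝ := fun i => ((i + 1 : ℕ) : ℝ) ^ p - (i : ℝ) ^ p with hg
  have gsum : ∀ n, ∑ i ∈ Finset.range n, g i = (n : ℝ) ^ p := by
    intro n
    rw [hg, Finset.sum_range_sub (fun i : ℕ => (i : ℝ) ^ p)]
    simp [Real.zero_rpow hp.ne']
  have gpos : ∀ i, 0 < g i := by
    intro i
    have : (i : ℝ) ^ p < ((i + 1 : ℕ) : ℝ) ^ p :=
      Real.rpow_lt_rpow i.cast_nonneg (by push_cast; linarith) hp
    exact sub_pos.2 this
  have glim : Tendsto (fun n : ℕ => g n / (n : ℝ) ^ (p - 1)) atTop (nhds p) := by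
    have hd : HasDerivAt (fun x : ℝ => x ^ p) p 1 := by
      simpa using Real.hasDerivAt_rpow_const (x := 1) (p := p) (Or.inl one_ne_zero)
    have hz : Tendsto (fun n : ℕ => ((n : ℝ))⁻¹) atTop (nhdsWithin 0 {0}ᶜ) := by
      rw [tendsto_nhdsWithin_iff]
      refine ⟨tendsto_inv_atTop_nhds_zero_nat, ?_⟩
      filter_upwards [eventually_gt_atTop 0] with n hn
      simp; omega
    have h1 := hd.tendsto_slope_zero.comp hz
    refine h1.congr' ?_
    filter_upwards [eventually_gt_atTop 0] with n hn
    have hn' : (0 : ℝ) < n := by exact_mod_cast hn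
    have e : ((n + 1 : ℕ) : ℝ) = n * (1 + (n : ℝ)⁻¹) := by push_cast; field_simp
    have q := (Real.rpow_pos_of_pos hn' p).ne'
    simp only [Function.comp, hg, smul_eq_mul, inv_inv, Real.one_rpow]
    rw [e, Real.mul_rpow hn'.le (by positivity), Real.rpow_sub_one hn'.ne']
    field_simp
  have hlo : (fun n => f n - c / p * g n) =o[atTop] g := by
    rw [Asymptotics.isLittleO_iff_tendsto (fun x hx => absurd hx (gpos x).ne')]
    have h2 := (hf.div glim hp.ne').sub_const (c / p)
    rw [sub_self] at h2
    refine h2.congr' ?_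
    filter_upwards [eventually_gt_atTop 0] with n hn
    have hn' : (0 : ℝ) < n := by exact_mod_cast hn
    have q := (Real.rpow_pos_of_pos hn' (p - 1)).ne'
    have := (gpos n).ne'
    simp only [Pi.div_apply]
    field_simp
  have hs := hlo.sum_range (fun i => (gpos i).le) (by
    simp_rw [gsum]
    exact (tendsto_rpow_atTop hp).comp tendsto_natCast_atTop_atTop)
  simp_rw [Finset.sum_sub_distrib, ← Finset.mul_sum, gsum] at hs
  have h3 := hs.tendsto_div_nhds_zero.add_const (c / p)
  rw [zero_add] at h3
  refine h3.congr' ?_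
  filter_upwards [eventually_gt_atTop 0] with n hn
  have hn' : (0 : ℝ) < n := by exact_mod_cast hn
  have q := (Real.rpow_pos_of_pos hn' p).ne'
  field_simp
  ring

lemma kern_tendsto {α β : ℝ} (hα : -1 < α) (hβ : -1 < β) (j k : ℕ) :
    Tendsto (fun n : ℕ => kernK α β j k (n - 1) 1 1 / (n : ℝ) ^ (2 * α + 2 * j + 2 * k + 2)) atTop
      (nhds (dK α j * dK α k / 2 ^ (α + β) / (2 * α + 2 * j + 2 * k + 2))) := by
  have hj0 : (0 : ℝ) ≤ j := j.cast_nonneg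
  have hk0 : (0 : ℝ) ≤ k := k.cast_nonneg
  have h2 : (2 : ℝ) ^ (α + β) ≠ 0 := (Real.rpow_pos_of_pos (by norm_num) _).ne'
  have h := sum_asym (p := 2 * α + 2 * j + 2 * k + 2) (c := dK α j * dK α k / 2 ^ (α + β))
    (f := fun i => (Polynomial.derivative^[j] (jacobiP α β i)).eval 1 *
      (Polynomial.derivative^[k] (jacobiP α β i)).eval 1 / jacobiNormSq α β i) (by linarith) (by
    refine (((deriv_tendsto hα hβ j).mul (deriv_tendsto hα hβ k)).div
      (norm_tendsto hα hβ) h2).congr' ?_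
    filter_upwards [eventually_gt_atTop 0] with n hn
    have hn' : (0 : ℝ) < n := by exact_mod_cast hn
    have e : (n : ℝ) ^ (2 * α + 2 * j + 2 * k + 2 - 1) =
        (n : ℝ) ^ (α + 2 * j) * (n : ℝ) ^ (α + 2 * k) * n := by
      rw [← Real.rpow_add hn', ← Real.rpow_add_one hn'.ne']; congr 1; ring
    simp only [Pi.div_apply]
    rw [e, div_mul_div_comm, div_div, div_div]
    congr 1
    ring)
  refine h.congr' ?_
  filter_upwards [eventually_gt_atTop 0] with n hn
  unfold kernK
  rw [show n - 1 + 1 = n by omega]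

lemma sobQ_deriv (α β : ℝ) (j k n : ℕ) (Ms : ℕ → ℝ) :
    (derivative^[k] (sobQ α β j Ms n)).eval 1 = (derivative^[k] (jacobiP α β n)).eval 1 -
      Ms n * (derivative^[j] (jacobiP α β n)).eval 1 / (1 + Ms n * kernK α β j j (n - 1) 1 1) *
        kernK α β j k (n - 1) 1 1 := by
  have h : (derivative^[k] (kernKPoly α β j (n - 1))).eval 1 = kernK α β j k (n - 1) 1 1 := by
    unfold kernKPoly kernK
    rw [Polynomial.iterate_derivative_sum, Polynomial.eval_finsetSum]
    refine Finset.sum_congr rfl fun i _ => ?_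
    rw [Polynomial.iterate_derivative_C_mul, eval_mul, eval_C]
    ring
  unfold sobQ
  rw [Polynomial.iterate_derivative_sub, Polynomial.iterate_derivative_C_mul, eval_sub, eval_mul,
    eval_C, h]

/-- limit of `Q_n^{(k)}(1)/(P_n^{(α,β)})^{(k)}(1)` when `γ < 2(α+2j+1)`. -/
theorem sobQ_deriv_ratio_small_gamma (α β : ℝ) (hα : -1 < α) (hβ : -1 < β) (j : ℕ)
    (γ M : ℝ) (hM : 0 < M) (Ms : ℕ → ℝ) (hMs : ∀ n, 0 ≤ Ms n)
    (hlim : Filter.Tendsto (fun n : ℕ => Ms n * (n : ℝ) ^ γ) Filter.atTop (nhds M))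
    (hγ : γ < 2 * (α + 2 * j + 1)) (k : ℕ) :
    Filter.Tendsto
      (fun n : ℕ => (Polynomial.derivative^[k] (sobQ α β j Ms n)).eval 1 /
        (Polynomial.derivative^[k] (jacobiP α β n)).eval 1)
      Filter.atTop (nhds (((k : ℝ) - j) / (α + j + k + 1))) := by
  have hj0 : (0 : ℝ) ≤ j := j.cast_nonneg
  have hk0 : (0 : ℝ) ≤ k := k.cast_nonneg
  have hX : Tendsto (fun n : ℕ => Ms n * (n : ℝ) ^ (2 * α + 2 * j + 2 * j + 2)) atTop atTop := by
    have h1 : Tendsto (fun n : ℕ => (n : ℝ) ^ (2 * α + 2 * j + 2 * j + 2 - γ)) atTop atTop :=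
      (tendsto_rpow_atTop (by linarith)).comp tendsto_natCast_atTop_atTop
    refine (hlim.pos_mul_atTop hM h1).congr' ?_
    filter_upwards [eventually_gt_atTop 0] with n hn
    have hn' : (0 : ℝ) < n := by exact_mod_cast hn
    rw [mul_assoc, ← Real.rpow_add hn']
    congr 2; ring
  have h2 : 0 < (2 : ℝ) ^ (α + β) := Real.rpow_pos_of_pos (by norm_num) _
  have pj := dK_pos hα j
  have pk := dK_pos hα k
  have hpj : 0 < 2 * α + 2 * j + 2 * j + 2 := by linarith
  have hpk : 0 < 2 * α + 2 * j + 2 * k + 2 := by linarith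
  have hD := deriv_tendsto hα hβ k
  have hden := (hX.inv_tendsto_atTop.add (kern_tendsto hα hβ j j)).mul hD
  have hall := (((deriv_tendsto hα hβ j).mul (kern_tendsto hα hβ j k)).div hden
    (by rw [zero_add]; positivity)).const_sub 1
  have hval : 1 - dK α j * (dK α j * dK α k / 2 ^ (α + β) / (2 * α + 2 * j + 2 * k + 2)) /
      ((0 + dK α j * dK α j / 2 ^ (α + β) / (2 * α + 2 * j + 2 * j + 2)) * dK α k) =
      ((k : ℝ) - j) / (α + j + k + 1) := by
    have e2 : 2 * α + 2 * (j : ℝ) + 2 * k + 2 = 2 * (α + j + k + 1) := by ring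
    rw [zero_add]
    rw [e2] at hpk ⊢
    have : 0 < α + j + k + 1 := by linarith
    field_simp
    ring
  rw [hval] at hall
  refine hall.congr' ?_
  filter_upwards [eventually_gt_atTop 0, hX.eventually_gt_atTop 0,
    hD.eventually_ne pk.ne', (kern_tendsto hα hβ j j).eventually_const_lt
      (u := 0)
      (div_pos (div_pos (mul_pos pj pj) h2) hpj)] with n hn hXn hDn hKn
  have hn' : (0 : ℝ) < n := by exact_mod_cast hn
  have hA := Real.rpow_pos_of_pos hn' (α + 2 * j)
  have hB := Real.rpow_pos_of_pos hn' (2 * α + 2 * j + 2 * k + 2)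
  have hP := Real.rpow_pos_of_pos hn' (2 * α + 2 * j + 2 * j + 2)
  have hE := Real.rpow_pos_of_pos hn' (α + 2 * k)
  have hrel : (n : ℝ) ^ (α + 2 * j) * (n : ℝ) ^ (2 * α + 2 * j + 2 * k + 2) =
      (n : ℝ) ^ (2 * α + 2 * j + 2 * j + 2) * (n : ℝ) ^ (α + 2 * k) := by
    rw [← Real.rpow_add hn', ← Real.rpow_add hn']; congr 1; ring
  have hMp : 0 < Ms n := pos_of_mul_pos_left hXn hP.le
  rw [sobQ_deriv]
  have hDk : (derivative^[k] (jacobiP α β n)).eval 1 ≠ 0 := by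
    intro h; rw [h] at hDn; simp at hDn
  have hK : 0 < kernK α β j j (n - 1) 1 1 := by
    have := mul_pos hKn hP
    rwa [div_mul_cancel₀ _ hP.ne'] at this
  simp only [Pi.div_apply, Pi.inv_apply]
  generalize (n : ℝ) ^ (α + 2 * j) = A at *
  generalize (n : ℝ) ^ (2 * α + 2 * j + 2 * k + 2) = B at *
  generalize (n : ℝ) ^ (2 * α + 2 * j + 2 * j + 2) = P at *
  generalize (n : ℝ) ^ (α + 2 * k) = E at *
  generalize kernK α β j j (n - 1) 1 1 = Kj at *
  generalize kernK α β j k (n - 1) 1 1 = Kk at *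
  generalize eval 1 (derivative^[k] (jacobiP α β n)) = Dk at *
  generalize eval 1 (derivative^[j] (jacobiP α β n)) = Dj at *
  generalize Ms n = m at *
  have hs : 0 < 1 + m * Kj := by positivity
  have e1 : (m * P)⁻¹ + Kj / P = (1 + m * Kj) / (m * P) := by field_simp
  rw [e1, sub_div, div_self hDk, div_mul_div_comm, hrel]
  field_simp
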